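/- Suppose L_1 = L_2 = ⋯ = L_n and λ_i ≤ μ_i for every i. Let y* = −A^{-1} b (the equilibrium point of y′ = Ay + b) and y_a* = (μ_a − λ_a)/(μ_a/L_a + θ̄) (the equilibrium of the aggregated model). Then |y_a* − Σ_{i=1}^n y_i*| ≤ √n (μ_a − λ_a) / min_i (μ_i/L_i + θ_i) + (μ_a − λ_a)/(μ_a/L_a + θ̄). -/

import Mathlib

/-!
Write `d i = μ i / L i + θ i`. By symmetry of `γ`, the `j`-th column of `A` sums to `-d j`, and
the off-diagonal entries are nonnegative, so `A` is strictly column diagonally dominant. This gives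
the `ℓ¹` estimate `∑ d i * |y i| ≤ ∑ |(A y) i|` (`sum_mul_abs_le`). It makes `A` invertible, and
applied to `y = A⁻¹ b` with `b ≥ 0` it yields `min d * ∑ |y i| ≤ ∑ b i = μ_a - λ_a`. Hence
`|∑ yᵢ*| ≤ (μ_a - λ_a) / min d`, which is at most the first term of the bound since `√n ≥ 1`;
the triangle inequality concludes.
-/

open Matrix

/-- The `ℓ¹` lower bound for the column diagonally dominant matrix `A`: bound `|(A y) i|` from below
by the diagonal term minus the off-diagonal ones, then sum over `i`; the transshipment terms cancel
because `γ` is symmetric. -/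
lemma sum_mul_abs_le {n : ℕ} (L d : Fin n → ℝ) (γ : Fin n → Fin n → ℝ)
    (hL : ∀ i, 0 < L i) (hd : ∀ i, 0 ≤ d i)
    (hγ : ∀ i j, 0 ≤ γ i j) (hγdiag : ∀ i, γ i i = 0) (hγsymm : ∀ i j, γ i j = γ j i)
    (A : Matrix (Fin n) (Fin n) ℝ)
    (hA : ∀ i j, A i j = if i = j then -(d i + ∑ k, γ i k / L i) else γ i j / L j)
    (y : Fin n → ℝ) :
    ∑ i, d i * |y i| ≤ ∑ i, |(A *ᵥ y) i| := by
  have hrow : ∀ i, (A *ᵥ y) i = ∑ j, γ i j / L j * y j - (d i + ∑ k, γ i k / L i) * y i := by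
    intro i
    have hsplit : ∀ j, A i j * y j = γ i j / L j * y j
        - if i = j then (d i + ∑ k, γ i k / L i) * y i else 0 := by
      intro j
      rw [hA]
      split_ifs with h
      · subst h
        rw [hγdiag]
        ring
      · ring
    simp only [Matrix.mulVec, dotProduct, hsplit, Finset.sum_sub_distrib, Finset.sum_ite_eq,
      Finset.mem_univ, if_true]
  have hbound : ∀ i, (d i + ∑ k, γ i k / L i) * |y i| - ∑ j, γ i j / L j * |y j|
      ≤ |(A *ᵥ y) i| := by
    intro i
    have hg : 0 ≤ d i + ∑ k, γ i k / L i :=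
      add_nonneg (hd i) (Finset.sum_nonneg fun k _ => div_nonneg (hγ i k) (hL i).le)
    have h1 : |∑ j, γ i j / L j * y j| ≤ ∑ j, γ i j / L j * |y j| := by
      refine (Finset.abs_sum_le_sum_abs _ _).trans_eq (Finset.sum_congr rfl fun j _ => ?_)
      rw [abs_mul, abs_of_nonneg (div_nonneg (hγ i j) (hL j).le)]
    have h2 := abs_sub_abs_le_abs_sub ((d i + ∑ k, γ i k / L i) * y i) (∑ j, γ i j / L j * y j)
    rw [abs_mul, abs_of_nonneg hg, abs_sub_comm, ← hrow i] at h2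
    linarith
  have hcancel : ∑ i, (∑ k, γ i k / L i) * |y i| = ∑ i, ∑ j, γ i j / L j * |y j| := by
    rw [Finset.sum_comm]
    refine Finset.sum_congr rfl fun i _ => ?_
    rw [Finset.sum_mul]
    exact Finset.sum_congr rfl fun k _ => by rw [hγsymm]
  have hsum := Finset.sum_le_sum fun i (_ : i ∈ Finset.univ) => hbound i
  simp only [add_mul, Finset.sum_sub_distrib, Finset.sum_add_distrib] at hsum
  linarith

/-- If `L₁ = ⋯ = Lₙ` and `λᵢ ≤ μᵢ` for all `i`, then the equilibrium `y* = −A⁻¹ b`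
of the basic model and the equilibrium `y_a* = (μ_a − λ_a)/(μ_a/L_a + θ̄)` of the
aggregated model satisfy
`|y_a* − Σᵢ yᵢ*| ≤ √n (μ_a − λ_a) / minᵢ (μᵢ/Lᵢ + θᵢ) + (μ_a − λ_a)/(μ_a/L_a + θ̄)`. -/
theorem aggregated_equilibrium_error_bound
    (n : ℕ) (hn : 1 ≤ n)
    (L μ θ lam : Fin n → ℝ) (γ : Fin n → Fin n → ℝ)
    (hL : ∀ i, 0 < L i) (hμ : ∀ i, 0 < μ i) (hθ : ∀ i, 0 ≤ θ i)
    (hγ : ∀ i j, 0 ≤ γ i j) (hγdiag : ∀ i, γ i i = 0) (hγsymm : ∀ i j, γ i j = γ j i)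
    (A : Matrix (Fin n) (Fin n) ℝ)
    (hA : ∀ i j, A i j =
      if i = j then -(μ i / L i + θ i + ∑ k, γ i k / L i) else γ i j / L j)
    (b : Fin n → ℝ) (hb : ∀ i, b i = μ i - lam i)
    (hLeq : ∀ i j, L i = L j) (hlam : ∀ i, lam i ≤ μ i)
    (La μa lama θbar : ℝ)
    (hLa : La = ∑ i, L i) (hμa : μa = ∑ i, μ i) (hlama : lama = ∑ i, lam i)
    (hθbar : θbar = (1 / (n : ℝ)) * ∑ i, θ i) :
    |(μa - lama) / (μa / La + θbar) - ∑ i, (-(A⁻¹.mulVec b)) i| ≤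
      Real.sqrt n * (μa - lama) /
        (Finset.univ.inf' ⟨⟨0, hn⟩, Finset.mem_univ _⟩ fun i => μ i / L i + θ i)
      + (μa - lama) / (μa / La + θbar) := by
  have hd : ∀ i, 0 < μ i / L i + θ i := fun i =>
    add_pos_of_pos_of_nonneg (div_pos (hμ i) (hL i)) (hθ i)
  have key := sum_mul_abs_le L (fun i => μ i / L i + θ i) γ hL (fun i => (hd i).le)
    hγ hγdiag hγsymm A hA
  have hdet : A.det ≠ 0 := by
    intro h0
    obtain ⟨v, hv, hAv⟩ := Matrix.exists_mulVec_eq_zero_iff.mpr h0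
    obtain ⟨i, hi⟩ := Function.ne_iff.mp hv
    have hle := key v
    have hpos : 0 < ∑ i, (μ i / L i + θ i) * |v i| :=
      Finset.sum_pos' (fun j _ => mul_nonneg (hd j).le (abs_nonneg _))
        ⟨i, Finset.mem_univ _, mul_pos (hd i) (abs_pos.mpr hi)⟩
    simp only [hAv, Pi.zero_apply, abs_zero, Finset.sum_const_zero] at hle
    linarith
  have hsolve : A *ᵥ (A⁻¹ *ᵥ b) = b := by
    rw [Matrix.mulVec_mulVec, Matrix.mul_nonsing_inv _ (isUnit_iff_ne_zero.mpr hdet),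
      Matrix.one_mulVec]
  have hsumb : ∑ i, |b i| = μa - lama := by
    rw [hμa, hlama, ← Finset.sum_sub_distrib]
    exact Finset.sum_congr rfl fun i _ => by
      rw [hb, abs_of_nonneg (sub_nonneg.mpr (hlam i))]
  have hy := key (A⁻¹ *ᵥ b)
  rw [hsolve, hsumb] at hy
  have hnum : 0 ≤ μa - lama := hsumb ▸ Finset.sum_nonneg fun i _ => abs_nonneg (b i)
  have hden : 0 ≤ μa / La + θbar := by
    rw [hμa, hLa, hθbar]
    exact add_nonneg
      (div_nonneg (Finset.sum_nonneg fun i _ => (hμ i).le) (Finset.sum_nonneg fun i _ => (hL i).le))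
      (mul_nonneg (by positivity) (Finset.sum_nonneg fun i _ => hθ i))
  set m := Finset.univ.inf' ⟨⟨0, hn⟩, Finset.mem_univ _⟩ fun i => μ i / L i + θ i with hm
  have hmpos : 0 < m := (Finset.lt_inf'_iff _).mpr fun i _ => hd i
  have hmle : ∀ i, m ≤ μ i / L i + θ i := fun i => Finset.inf'_le _ (Finset.mem_univ i)
  have hl1 : (∑ i, |(A⁻¹ *ᵥ b) i|) * m ≤ μa - lama := by
    refine le_trans ?_ hy
    rw [Finset.sum_mul]
    refine Finset.sum_le_sum fun i _ => ?_
    rw [mul_comm]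
    exact mul_le_mul_of_nonneg_right (hmle i) (abs_nonneg _)
  have hsqrt : 1 ≤ Real.sqrt n := Real.one_le_sqrt.mpr (by exact_mod_cast hn)
  have habs : |∑ i, (-(A⁻¹ *ᵥ b)) i| ≤ Real.sqrt n * (μa - lama) / m := by
    rw [le_div_iff₀ hmpos]
    calc |∑ i, (-(A⁻¹ *ᵥ b)) i| * m ≤ (∑ i, |(A⁻¹ *ᵥ b) i|) * m := by
          refine mul_le_mul_of_nonneg_right ?_ hmpos.le
          refine (Finset.abs_sum_le_sum_abs _ _).trans_eq ?_
          simp only [Pi.neg_apply, abs_neg]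
      _ ≤ μa - lama := hl1
      _ ≤ Real.sqrt n * (μa - lama) := le_mul_of_one_le_left hnum hsqrt
  have htri := abs_sub ((μa - lama) / (μa / La + θbar)) (∑ i, (-(A⁻¹ *ᵥ b)) i)
  rw [abs_of_nonneg (div_nonneg hnum hden)] at htri
  linarith
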